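/- Let E be a Fréchet space whose topology is generated by an increasing sequence of seminorms (‖·‖_k), let ℓ₁, ℓ₂, ℓ₃ be Banach sequence spaces with monotone norm, and let A = (a_v^k), B = (b_i^k), C = (c_j^k) be Köthe matrices with A and B satisfying the Grothendieck–Pietsch nuclearity condition (for every k there is m with Σ_v a_v^k/a_v^m < ∞ and Σ_i b_i^k/b_i^m < ∞). Let D be the Köthe matrix on the index set ℕ × ℕ given by d_{(v,i)}^k := a_v^k · b_i^k, so that λ(D) is isomorphic to the completed projective tensor product λ^{ℓ₁}(A) ⊗̂_π λ^{ℓ₂}(B). If (E, λ^{ℓ₁}(A)) ∈ 𝓑 and (λ^{ℓ₂}(B), λ^{ℓ₃}(C)) ∈ 𝓑, then (E, λ(D), λ^{ℓ₃}(C)) ∈ 𝓑𝓕. -/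

import Mathlib

/-!
The operator `R ∘ S` is expanded along the unit vectors `e_{(v,i)}` of `λ(D)`:
`R (S x) = ∑ u_{vi}(x) • y_{vi}`, where `u_{vi}(x) = S x (v,i)` and `y_{vi} = R e_{(v,i)}`.
It is bounded as soon as `∑ ‖u_{vi}‖*_N ‖y_{vi}‖_r < ∞` for one `N` and all `r`
(`norm_apply_le_of_partial_sums`). The two hypotheses on pairs give the two factors.

* `uniform_bound_coord`: for every `s` there is `N` such that, for every `n`,
  `‖u_{vi}‖*_N ≤ C / (a_v^n b_i^s)` for all `v, i`. If it fails, there are strictly increasing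
  `v_t` and some `i_t` violating the bound for ever larger data, and the operator
  `x ↦ (b_{j(v)}^s u_{v,j(v)}(x))_v`, with `j(v_t) = i_t`, is continuous from `E` to `λ^{ℓ₁}(A)`
  but unbounded.
* `uniform_bound_unit`: there is `N'` such that, for every `r`, `‖y_{vi}‖_r ≤ C a_v^{n'} b_i^{N'}`
  for some `n'` and all `v, i`. If it fails, there are strictly increasing `i_t` and some `v_t`
  violating the bound, and `e_i ↦ (a_{w(i)}^{n(i)})⁻¹ y_{w(i),i}`, with `w(i_t) = v_t` and
  `n(i_t) ≥ t`, is continuous from `λ^{ℓ₂}(B)` to `λ^{ℓ₃}(C)` but unbounded.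

In both cases the violating indices can be taken strictly increasing because, for a single index,
the desired bound is a consequence of continuity; strict monotonicity lets one operator carry all
the violations without interference. With `N'` given by the second bound, `s` chosen from `N'` and
`n` from `n'` by the Grothendieck–Pietsch condition, the product of the two bounds is at most a
constant times `(a_v^{n'} / a_v^n) (b_i^{N'} / b_i^s)`, which is summable.
-/


open scoped ENNReal BigOperators

/-- The `n`-th canonical unit sequence in `ℝ^ℕ`. -/
def eSeq (n : ℕ) : ℕ → ℝ := fun m => if m = n then 1 else 0

/-- Unconditional (finite-partial-sums) convergence of the series `∑ n, f n` to `y`,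
with respect to the norm `nn`. -/
def HasSumIn (nn : (ℕ → ℝ) → ℝ) (f : ℕ → ℕ → ℝ) (y : ℕ → ℝ) : Prop :=
  ∀ ε : ℝ, 0 < ε → ∃ F : Finset ℕ, ∀ G : Finset ℕ, F ⊆ G → nn ((∑ n ∈ G, f n) - y) < ε

/-- A Banach sequence space with a monotone norm in which the canonical system `(eSeq n)`
is an unconditional basis. -/
structure MonoBanachSeqSpace where
  mem : (ℕ → ℝ) → Prop
  nrm : (ℕ → ℝ) → ℝ
  mem_zero : mem 0
  mem_add : ∀ {x y}, mem x → mem y → mem (x + y)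
  mem_smul : ∀ (c : ℝ) {x}, mem x → mem (c • x)
  nrm_nonneg : ∀ x, mem x → 0 ≤ nrm x
  nrm_eq_zero_iff : ∀ {x}, mem x → (nrm x = 0 ↔ x = 0)
  nrm_add_le : ∀ {x y}, mem x → mem y → nrm (x + y) ≤ nrm x + nrm y
  nrm_smul : ∀ (c : ℝ) {x}, mem x → nrm (c • x) = |c| * nrm x
  complete : ∀ u : ℕ → ℕ → ℝ, (∀ n, mem (u n)) →
    (∀ ε : ℝ, 0 < ε → ∃ M, ∀ p q, M ≤ p → M ≤ q → nrm (u p - u q) < ε) →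
    ∃ x, mem x ∧ ∀ ε : ℝ, 0 < ε → ∃ M, ∀ p, M ≤ p → nrm (u p - x) < ε
  mem_e : ∀ n, mem (eSeq n)
  nrm_e : ∀ n, nrm (eSeq n) = 1
  mem_mul : ∀ (β : ℕ → ℝ) {x}, mem x → (∀ n, |β n| ≤ 1) → mem fun n => β n * x n
  expand : ∀ {x : ℕ → ℝ} (β : ℕ → ℝ), mem x → (∀ n, |β n| ≤ 1) →
    HasSumIn nrm (fun n => (β n * x n) • eSeq n) (fun n => β n * x n)
  mono : ∀ {x y}, mem x → mem y → (∀ n, |x n| ≤ |y n|) → nrm x ≤ nrm y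

/-- A Köthe matrix over a countable index set. -/
def IsKotheMatrix {ι : Type*} (a : ι → ℕ → ℝ) : Prop :=
  ∀ n k, 0 < a n k ∧ a n k ≤ a n (k + 1)

/-- Membership in the Köthe space `λ(a)`. -/
def memLam {ι : Type*} (a : ι → ℕ → ℝ) (x : ι → ℝ) : Prop :=
  ∀ k, Summable fun n => |x n| * a n k

/-- The `k`-th seminorm of the Köthe space `λ(a)`. -/
noncomputable def lamNorm {ι : Type*} (a : ι → ℕ → ℝ) (k : ℕ) (x : ι → ℝ) : ℝ :=
  ∑' n, |x n| * a n k

/-- Membership in the `ℓ`-Köthe space `λ^ℓ(b)`. -/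
def memLamL (l : MonoBanachSeqSpace) (b : ℕ → ℕ → ℝ) (x : ℕ → ℝ) : Prop :=
  ∀ k, l.mem fun n => x n * b n k

/-- The `k`-th seminorm of the `ℓ`-Köthe space `λ^ℓ(b)`. -/
noncomputable def lamLNorm (l : MonoBanachSeqSpace) (b : ℕ → ℕ → ℝ) (k : ℕ) (x : ℕ → ℝ) : ℝ :=
  l.nrm fun n => x n * b n k

/-- The operator seminorm `‖T‖_{pY,pX} = sup {pY (T x) : x ∈ memX, pX x ≤ 1}`,
with values in `ℝ≥0∞`. -/
noncomputable def opSeminorm {X Y : Type*} (memX : X → Prop) (pX : X → ℝ) (pY : Y → ℝ)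
    (T : X → Y) : ℝ≥0∞ :=
  ⨆ x : {x : X // memX x ∧ pX x ≤ 1}, ENNReal.ofReal (pY (T x.1))

/-- The dual seminorm `‖u‖*_k = sup {|u x| : p k x ≤ 1}` of a linear functional,
with values in `ℝ≥0∞`. -/
noncomputable def dualNorm {E : Type*} [AddCommGroup E] [Module ℝ E]
    (p : ℕ → Seminorm ℝ E) (k : ℕ) (u : E →ₗ[ℝ] ℝ) : ℝ≥0∞ :=
  ⨆ x : {x : E // p k x ≤ 1}, ENNReal.ofReal |u x.1|

/-- `max_{1 ≤ k ≤ k₀} f k` for a real-valued `f`. -/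
noncomputable def maxIcc (k₀ : ℕ) (h : 1 ≤ k₀) (f : ℕ → ℝ) : ℝ :=
  (Finset.Icc 1 k₀).sup' (Finset.nonempty_Icc.mpr h) f

/-! ### Operator seminorms as inequalities -/

/-- On a homogeneous domain, finiteness of `‖T‖_{pY,pX}` is an estimate `pY (T x) ≤ C * pX x`. -/
theorem exists_bound_of_opSeminorm_lt_top {X Y : Type*} [AddCommGroup X] [Module ℝ X]
    {memX : X → Prop} {pX : X → ℝ} {pY : Y → ℝ} {T : X → Y}
    (hs : ∀ (t : ℝ) x, memX x → memX (t • x))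
    (hXn : ∀ x, memX x → 0 ≤ pX x)
    (hX : ∀ (t : ℝ) x, memX x → pX (t • x) = |t| * pX x)
    (hY : ∀ (t : ℝ) x, memX x → pY (T (t • x)) = |t| * pY (T x))
    (h : opSeminorm memX pX pY T < ⊤) :
    ∃ C : ℝ, 0 ≤ C ∧ ∀ x, memX x → pY (T x) ≤ C * pX x := by
  set M := (opSeminorm memX pX pY T).toReal with hM
  have hM0 : 0 ≤ M := ENNReal.toReal_nonneg
  have key : ∀ x, memX x → pX x ≤ 1 → pY (T x) ≤ M := by
    intro x hx hx1
    have h1 : ENNReal.ofReal (pY (T x)) ≤ opSeminorm memX pX pY T :=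
      le_iSup (fun x : {x : X // memX x ∧ pX x ≤ 1} => ENNReal.ofReal (pY (T x.1)))
        ⟨x, hx, hx1⟩
    exact (ENNReal.ofReal_le_iff_le_toReal h.ne).1 h1
  refine ⟨M, hM0, fun x hx => ?_⟩
  rcases (hXn x hx).eq_or_lt with h0 | hpos
  · -- a vector of seminorm zero may be scaled at will, so its image has seminorm at most zero
    rw [← h0, mul_zero]
    by_contra hcon
    push Not at hcon
    have h2 := key (((M + 1) / pY (T x)) • x) (hs _ _ hx) (by rw [hX _ _ hx, ← h0]; simp)
    rw [hY _ _ hx, abs_of_pos (by positivity), div_mul_cancel₀ _ hcon.ne'] at h2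
    linarith
  · have h2 := key ((pX x)⁻¹ • x) (hs _ _ hx) (by
      rw [hX _ _ hx, abs_of_pos (by positivity), inv_mul_cancel₀ hpos.ne'])
    rw [hY _ _ hx, abs_of_pos (by positivity), inv_mul_le_iff₀ hpos] at h2
    linarith

theorem opSeminorm_lt_top_of_bound {X Y : Type*}
    {memX : X → Prop} {pX : X → ℝ} {pY : Y → ℝ} {T : X → Y} {C : ℝ} (hC : 0 ≤ C)
    (h : ∀ x, memX x → pY (T x) ≤ C * pX x) :
    opSeminorm memX pX pY T < ⊤ := by
  refine lt_of_le_of_lt (b := ENNReal.ofReal C) (iSup_le fun x => ?_) ENNReal.ofReal_lt_top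
  refine ENNReal.ofReal_le_ofReal ((h x.1 x.2.1).trans ?_)
  simpa using mul_le_mul_of_nonneg_left x.2.2 hC

/-! ### Banach sequence spaces and Köthe spaces -/

namespace MonoBanachSeqSpace

theorem abs_apply_le_nrm (l : MonoBanachSeqSpace) {x : ℕ → ℝ} (hx : l.mem x) (n : ℕ) :
    |x n| ≤ l.nrm x := by
  have h := l.mono (l.mem_smul (x n) (l.mem_e n)) hx (fun m => by
    by_cases hm : m = n <;> simp [eSeq, hm])
  rwa [l.nrm_smul _ (l.mem_e n), l.nrm_e, mul_one] at h

theorem mem_sub (l : MonoBanachSeqSpace) {x y : ℕ → ℝ} (hx : l.mem x) (hy : l.mem y) :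
    l.mem (x - y) := by
  have h := l.mem_add hx (l.mem_smul (-1) hy)
  rwa [neg_one_smul, ← sub_eq_add_neg] at h

theorem nrm_sub_comm (l : MonoBanachSeqSpace) {x y : ℕ → ℝ} (hx : l.mem x) (hy : l.mem y) :
    l.nrm (x - y) = l.nrm (y - x) := by
  have h := l.nrm_smul (-1) (l.mem_sub hy hx)
  simpa using h

theorem mem_sum_smul (l : MonoBanachSeqSpace) (y : ℕ → ℝ) (F : Finset ℕ) :
    l.mem (∑ n ∈ F, y n • eSeq n) ∧ l.nrm (∑ n ∈ F, y n • eSeq n) ≤ ∑ n ∈ F, |y n| := by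
  classical
  induction F using Finset.induction_on with
  | empty => simpa using ⟨l.mem_zero, ((l.nrm_eq_zero_iff l.mem_zero).2 rfl).le⟩
  | insert n F hn ih =>
    rw [Finset.sum_insert hn, Finset.sum_insert hn]
    have h1 := l.mem_smul (y n) (l.mem_e n)
    refine ⟨l.mem_add h1 ih.1, (l.nrm_add_le h1 ih.1).trans ?_⟩
    rw [l.nrm_smul _ (l.mem_e n), l.nrm_e, mul_one]
    linarith [ih.2]

theorem sum_smul_apply (y : ℕ → ℝ) (F : Finset ℕ) (m : ℕ) :
    (∑ n ∈ F, y n • eSeq n) m = if m ∈ F then y m else 0 := by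
  simp [Finset.sum_apply, eSeq]

/-- `ℓ¹` embeds contractively in every Banach sequence space. -/
theorem mem_of_summable (l : MonoBanachSeqSpace) {y : ℕ → ℝ} (hy : Summable fun n => |y n|) :
    l.mem y ∧ l.nrm y ≤ ∑' n, |y n| := by
  set u : ℕ → ℕ → ℝ := fun k => ∑ n ∈ Finset.range k, y n • eSeq n with hu
  have hum : ∀ k, l.mem (u k) := fun k => (l.mem_sum_smul y _).1
  have hsub : ∀ P Q, P ≤ Q → l.nrm (u Q - u P) ≤
      |(∑ n ∈ Finset.range Q, |y n|) - (∑ n ∈ Finset.range P, |y n|)| := by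
    intro P Q hPQ
    rw [hu]
    simp only
    rw [Finset.sum_range_sub_sum_range hPQ, Finset.sum_range_sub_sum_range hPQ]
    exact ((l.mem_sum_smul y _).2).trans (le_abs_self _)
  have hcau := hy.hasSum.tendsto_sum_nat.cauchySeq
  rw [Metric.cauchySeq_iff] at hcau
  obtain ⟨x, hx, hlim⟩ := l.complete u hum (by
    intro ε hε
    obtain ⟨M, hM⟩ := hcau ε hε
    refine ⟨M, fun P Q hP hQ => ?_⟩
    rcases le_total P Q with h | h
    · rw [l.nrm_sub_comm (hum P) (hum Q)]
      exact (hsub P Q h).trans_lt (hM Q hQ P hP)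
    · exact (hsub Q P h).trans_lt (hM P hP Q hQ))
  have hxy : x = y := by
    funext n
    by_contra hne
    have hpos : 0 < |y n - x n| := abs_pos.2 (sub_ne_zero.2 (Ne.symm hne))
    obtain ⟨M, hM⟩ := hlim _ hpos
    have h1 := hM (max M (n + 1)) (le_max_left _ _)
    have h2 := l.abs_apply_le_nrm (l.mem_sub (hum (max M (n + 1))) hx) n
    have h3 : (u (max M (n + 1)) - x) n = y n - x n := by
      rw [Pi.sub_apply, hu]
      simp only
      rw [sum_smul_apply, if_pos (by simp)]
    rw [h3] at h2
    linarith
  subst hxy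
  refine ⟨hx, le_of_forall_pos_le_add fun ε hε => ?_⟩
  obtain ⟨M, hM⟩ := hlim ε hε
  have h1 := hM M le_rfl
  rw [l.nrm_sub_comm (hum M) hx] at h1
  have h2 := l.nrm_add_le (hum M) (l.mem_sub hx (hum M))
  rw [add_sub_cancel] at h2
  have h3 : l.nrm (u M) ≤ ∑' n, |x n| :=
    ((l.mem_sum_smul x _).2).trans (hy.sum_le_tsum _ (fun _ _ => abs_nonneg _))
  linarith

end MonoBanachSeqSpace

theorem IsKotheMatrix.pos {ι : Type*} {a : ι → ℕ → ℝ} (ha : IsKotheMatrix a) (n : ι) (k : ℕ) :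
    0 < a n k := (ha n k).1

theorem IsKotheMatrix.mono {ι : Type*} {a : ι → ℕ → ℝ} (ha : IsKotheMatrix a) (n : ι)
    {k m : ℕ} (h : k ≤ m) : a n k ≤ a n m :=
  monotone_nat_of_le_succ (f := a n) (fun k => (ha n k).2) h

section KotheSpaces

variable {l : MonoBanachSeqSpace} {b : ℕ → ℕ → ℝ}

theorem memLamL_smul (t : ℝ) {z : ℕ → ℝ} (hz : memLamL l b z) : memLamL l b (t • z) := by
  intro k
  have h := l.mem_smul t (hz k)
  convert h using 1
  funext n
  simp [mul_assoc]

theorem lamLNorm_smul (k : ℕ) (t : ℝ) {z : ℕ → ℝ} (hz : memLamL l b z) :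
    lamLNorm l b k (t • z) = |t| * lamLNorm l b k z := by
  unfold lamLNorm
  rw [← l.nrm_smul t (hz k)]
  congr 1
  funext n
  simp [mul_assoc]

theorem lamLNorm_add_le (k : ℕ) {z w : ℕ → ℝ} (hz : memLamL l b z) (hw : memLamL l b w) :
    lamLNorm l b k (z + w) ≤ lamLNorm l b k z + lamLNorm l b k w := by
  unfold lamLNorm
  refine le_trans (le_of_eq ?_) (l.nrm_add_le (hz k) (hw k))
  congr 1
  funext n
  simp [add_mul]

theorem lamLNorm_nonneg (k : ℕ) {z : ℕ → ℝ} (hz : memLamL l b z) : 0 ≤ lamLNorm l b k z :=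
  l.nrm_nonneg _ (hz k)

theorem abs_mul_le_lamLNorm (hb : IsKotheMatrix b) (k : ℕ) {z : ℕ → ℝ} (hz : memLamL l b z)
    (n : ℕ) : |z n| * b n k ≤ lamLNorm l b k z := by
  have h := l.abs_apply_le_nrm (hz k) n
  rwa [abs_mul, abs_of_pos (hb.pos n k)] at h

theorem eSeq_mul_eq (n k : ℕ) : (fun m => eSeq n m * b m k) = b n k • eSeq n := by
  funext m
  by_cases h : m = n <;> simp [eSeq, h]

theorem memLamL_eSeq (n : ℕ) : memLamL l b (eSeq n) := by
  intro k
  rw [eSeq_mul_eq]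
  exact l.mem_smul _ (l.mem_e n)

theorem lamLNorm_eSeq (hb : IsKotheMatrix b) (k n : ℕ) : lamLNorm l b k (eSeq n) = b n k := by
  unfold lamLNorm
  rw [eSeq_mul_eq, l.nrm_smul _ (l.mem_e n), l.nrm_e, mul_one, abs_of_pos (hb.pos n k)]

end KotheSpaces

section Lam

variable {ι : Type*} {d : ι → ℕ → ℝ}

theorem memLam_add {z w : ι → ℝ} (hd : ∀ j k, 0 ≤ d j k) (hz : memLam d z) (hw : memLam d w) :
    memLam d (z + w) := by
  intro k
  refine Summable.of_nonneg_of_le (fun j => mul_nonneg (abs_nonneg _) (hd j k)) (fun j => ?_)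
    ((hz k).add (hw k))
  rw [← add_mul]
  exact mul_le_mul_of_nonneg_right (abs_add_le _ _) (hd j k)

theorem memLam_smul (t : ℝ) {z : ι → ℝ} (hz : memLam d z) : memLam d (t • z) := by
  intro k
  simpa [abs_mul, mul_assoc] using (hz k).mul_left |t|

theorem lamNorm_smul (k : ℕ) (t : ℝ) (z : ι → ℝ) :
    lamNorm d k (t • z) = |t| * lamNorm d k z := by
  simp [lamNorm, abs_mul, mul_assoc, tsum_mul_left]

theorem lamNorm_nonneg (hd : ∀ j k, 0 ≤ d j k) (k : ℕ) (z : ι → ℝ) : 0 ≤ lamNorm d k z :=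
  tsum_nonneg fun j => mul_nonneg (abs_nonneg _) (hd j k)

theorem hasSum_single_mul [DecidableEq ι] (j : ι) (k : ℕ) :
    HasSum (fun m => |(Pi.single j (1 : ℝ) : ι → ℝ) m| * d m k) (d j k) := by
  have h := hasSum_single (f := fun m => |(Pi.single j (1 : ℝ) : ι → ℝ) m| * d m k) j
    (fun m hm => by simp [Pi.single_eq_of_ne hm])
  simpa using h

theorem memLam_single [DecidableEq ι] (j : ι) : memLam d (Pi.single j (1 : ℝ)) :=
  fun k => (hasSum_single_mul j k).summable

theorem lamNorm_single [DecidableEq ι] (j : ι) (k : ℕ) :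
    lamNorm d k (Pi.single j (1 : ℝ)) = d j k :=
  (hasSum_single_mul j k).tsum_eq

theorem memLam_indicator (hd : ∀ j k, 0 ≤ d j k) {z : ι → ℝ} (hz : memLam d z) (s : Set ι) :
    memLam d (s.indicator z) := by
  intro k
  refine Summable.of_nonneg_of_le (fun j => mul_nonneg (abs_nonneg _) (hd j k)) (fun j => ?_)
    (hz k)
  refine mul_le_mul_of_nonneg_right ?_ (hd j k)
  by_cases h : j ∈ s <;> simp [h]

/-- The image of `z` under a continuous operator on `λ(d)` is controlled by the finite sums of the
images of the unit vectors, since the finite sections of `z` converge to `z` in `λ(d)`. -/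
theorem norm_apply_le_of_partial_sums [DecidableEq ι] (hd : ∀ j k, 0 ≤ d j k)
    {l : MonoBanachSeqSpace} {c : ℕ → ℕ → ℝ} {R : (ι → ℝ) → (ℕ → ℝ)}
    (hmem : ∀ z, memLam d z → memLamL l c (R z))
    (hadd : ∀ z w, memLam d z → memLam d w → R (z + w) = R z + R w)
    (hsmul : ∀ (t : ℝ) (z), memLam d z → R (t • z) = t • R z)
    {r q : ℕ} {C : ℝ} (hC : ∀ z, memLam d z → lamLNorm l c r (R z) ≤ C * lamNorm d q z)
    {z : ι → ℝ} (hz : memLam d z) {M : ℝ}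
    (hM : ∀ F : Finset ι, ∑ j ∈ F, |z j| * lamLNorm l c r (R (Pi.single j 1)) ≤ M) :
    lamLNorm l c r (R z) ≤ M := by
  have hfin : ∀ F : Finset ι, lamLNorm l c r (R ((F : Set ι).indicator z)) ≤ M := by
    intro F
    refine le_trans ?_ (hM F)
    induction F using Finset.induction_on with
    | empty =>
      have h0 : ((∅ : Finset ι) : Set ι).indicator z = (0 : ℝ) • z := by
        funext m
        simp
      rw [h0, hsmul _ _ hz, lamLNorm_smul _ _ (hmem _ hz)]
      simp
    | insert j F hj ih =>
      have hs : ((insert j F : Finset ι) : Set ι).indicator z =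
          z j • (Pi.single j 1 : ι → ℝ) + (F : Set ι).indicator z := by
        funext m
        by_cases hm : m = j
        · subst hm
          simp [hj]
        · by_cases hF : m ∈ F <;> simp [hm, hF]
      have h1 := memLam_smul (z j) (memLam_single (d := d) j)
      have h2 := memLam_indicator hd hz (F : Set ι)
      rw [hs, hadd _ _ h1 h2, Finset.sum_insert hj]
      refine (lamLNorm_add_le r (hmem _ h1) (hmem _ h2)).trans (add_le_add (le_of_eq ?_) ih)
      rw [hsmul _ _ (memLam_single j), lamLNorm_smul _ _ (hmem _ (memLam_single j))]
  have hbd : ∀ F : Finset ι, lamLNorm l c r (R z) ≤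
      M + C * ∑' j : {j // j ∉ F}, |z j| * d j q := by
    intro F
    have h1 := memLam_indicator hd hz (F : Set ι)
    have h2 := memLam_indicator hd hz ((F : Set ι)ᶜ)
    have hsplit : z = (F : Set ι).indicator z + ((F : Set ι)ᶜ).indicator z :=
      (Set.indicator_self_add_compl _ _).symm
    have htail : lamNorm d q (((F : Set ι)ᶜ).indicator z) =
        ∑' j : {j // j ∉ F}, |z j| * d j q := by
      have h3 := tsum_subtype ((F : Set ι)ᶜ) (fun j => |z j| * d j q)
      refine Eq.trans (tsum_congr fun j => ?_) h3.symm
      by_cases hj : j ∈ F <;> simp [hj]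
    calc lamLNorm l c r (R z)
        = lamLNorm l c r (R ((F : Set ι).indicator z) + R (((F : Set ι)ᶜ).indicator z)) := by
          rw [← hadd _ _ h1 h2, ← hsplit]
      _ ≤ _ := lamLNorm_add_le r (hmem _ h1) (hmem _ h2)
      _ ≤ _ := add_le_add (hfin F) ((hC _ h2).trans_eq (by rw [htail]))
  have hlim := ((tendsto_tsum_compl_atTop_zero (fun j => |z j| * d j q)).const_mul C).const_add M
  rw [mul_zero, add_zero] at hlim
  exact ge_of_tendsto' hlim hbd

end Lam

/-! ### The coordinate functionals of an operator into `λ(D)` -/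

/-- If `(E, λ^{ℓ₁}(A)) ∈ 𝓑`, the coordinate functionals of a continuous `S : E → λ(D)` satisfy
`‖u_{vi}‖*_N ≤ C / (a_v^n b_i^s)`, where `N` depends on `s` only and `C` on `s` and `n`. -/
theorem uniform_bound_coord
    {E : Type*} [AddCommGroup E] [Module ℝ E]
    (p : ℕ → Seminorm ℝ E)
    (hpmono : ∀ k x, p k x ≤ p (k + 1) x)
    (a b : ℕ → ℕ → ℝ)
    (ha : IsKotheMatrix a) (hb : IsKotheMatrix b)
    (l1 : MonoBanachSeqSpace)
    (d : ℕ × ℕ → ℕ → ℝ) (hd : ∀ (v i k : ℕ), d (v, i) k = a v k * b i k)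
    (hB1 : ∀ T : E →ₗ[ℝ] (ℕ → ℝ),
        (∀ x, memLamL l1 a (T x)) →
        (∀ k, ∃ m, opSeminorm (fun _ : E => True) (fun x => p m x) (lamLNorm l1 a k) T < ⊤) →
        ∃ N, ∀ r, opSeminorm (fun _ : E => True) (fun x => p N x) (lamLNorm l1 a r) T < ⊤)
    (S : E →ₗ[ℝ] (ℕ × ℕ → ℝ)) (hS : ∀ x, memLam d (S x))
    (hcont : ∀ k, ∃ m, ∃ C : ℝ, 0 ≤ C ∧ ∀ x, lamNorm d k (S x) ≤ C * p m x) (s : ℕ) :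
    ∃ N, ∀ n, ∃ C : ℝ, 0 ≤ C ∧ ∀ v i x, |S x (v, i)| * (a v n * b i s) ≤ C * p N x := by
  have hpm : ∀ {k m : ℕ}, k ≤ m → ∀ x, p k x ≤ p m x := fun h x =>
    monotone_nat_of_le_succ (f := fun k => p k x) (fun k => hpmono k x) h
  have hd0 : ∀ j k, 0 ≤ d j k := fun ⟨v, i⟩ k => by
    rw [hd]; exact (mul_pos (ha.pos v k) (hb.pos i k)).le
  by_contra hcon
  push Not at hcon
  choose nf hnf using hcon
  obtain ⟨m, C0, hC0, hm⟩ := hcont s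
  have hpt : ∀ v i x, |S x (v, i)| * (a v s * b i s) ≤ C0 * p m x := fun v i x => by
    rw [← hd]
    exact ((hS x s).le_tsum (v, i) (fun j _ => mul_nonneg (abs_nonneg _) (hd0 j s))).trans (hm x)
  -- the first component of `Nat.unpair` takes every value infinitely often
  set Nf : ℕ → ℕ := fun t => m + (Nat.unpair t).1 with hNf
  have hfreq : ∀ t : ℕ, ∃ᶠ v in Filter.atTop, ∃ i x,
      (t : ℝ) * p (Nf t) x < |S x (v, i)| * (a v (nf (Nf t)) * b i s) := by
    intro t
    rw [Filter.frequently_atTop]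
    intro V
    have hnn : ∀ v ∈ Finset.range V, 0 ≤ C0 * (a v (nf (Nf t)) / a v s) := fun v _ =>
      mul_nonneg hC0 (div_pos (ha.pos _ _) (ha.pos _ _)).le
    have hsum := Finset.sum_nonneg hnn
    obtain ⟨v, i, x, hx⟩ := hnf (Nf t)
      (t + ∑ v ∈ Finset.range V, C0 * (a v (nf (Nf t)) / a v s)) (by positivity)
    have hp0 : 0 ≤ p (Nf t) x := apply_nonneg _ _
    refine ⟨v, ?_, i, x, lt_of_le_of_lt (mul_le_mul_of_nonneg_right (by linarith) hp0) hx⟩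
    -- a violation at some `v < V` contradicts the continuity bound `hpt`
    by_contra hv
    push Not at hv
    refine hx.not_ge ?_
    have h1 := Finset.single_le_sum hnn (Finset.mem_range.2 hv)
    have h2 : |S x (v, i)| * (a v (nf (Nf t)) * b i s) =
        |S x (v, i)| * (a v s * b i s) * (a v (nf (Nf t)) / a v s) := by
      have := (ha.pos v s).ne'
      field_simp
    have hr : 0 ≤ a v (nf (Nf t)) / a v s := (div_pos (ha.pos _ _) (ha.pos _ _)).le
    have h3 : p m x ≤ p (Nf t) x := hpm (by simp [hNf]) x
    calc _ = _ := h2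
      _ ≤ C0 * p m x * (a v (nf (Nf t)) / a v s) := mul_le_mul_of_nonneg_right (hpt v i x) hr
      _ ≤ C0 * p (Nf t) x * (a v (nf (Nf t)) / a v s) := by gcongr
      _ = C0 * (a v (nf (Nf t)) / a v s) * p (Nf t) x := by ring
      _ ≤ _ := mul_le_mul_of_nonneg_right (h1.trans (by simp)) hp0
  obtain ⟨φ, hφ, hP⟩ := Filter.extraction_forall_of_frequently hfreq
  choose i x hix using hP
  set j : ℕ → ℕ := fun v => i (Function.invFun φ v) with hj
  have hjφ : ∀ t, j (φ t) = i t := fun t => by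
    simp only [hj]
    rw [Function.leftInverse_invFun hφ.injective t]
  let T : E →ₗ[ℝ] (ℕ → ℝ) :=
    { toFun := fun x v => b (j v) s * S x (v, j v)
      map_add' := fun x y => by funext v; simp [mul_add]
      map_smul' := fun t x => by funext v; simp; ring }
  have hTle : ∀ x k, Summable (fun v => |T x v * a v k|) ∧
      ∑' v, |T x v * a v k| ≤ lamNorm d (max k s) (S x) := by
    intro x k
    have hinj : Function.Injective fun v : ℕ => (v, j v) := fun v w h => (Prod.ext_iff.1 h).1
    have hs1 := (hS x (max k s)).comp_injective hinj
    have hle : ∀ v, |T x v * a v k| ≤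
        ((fun n => |S x n| * d n (max k s)) ∘ fun v : ℕ => (v, j v)) v := by
      intro v
      have hb0 := hb.pos (j v) s
      have ha0 := ha.pos v k
      have h1 := ha.mono v (le_max_left k s)
      have h2 := hb.mono (j v) (le_max_right k s)
      simp only [Function.comp_apply, hd]
      change |b (j v) s * S x (v, j v) * a v k| ≤ _
      rw [abs_mul, abs_mul, abs_of_pos hb0, abs_of_pos ha0]
      calc b (j v) s * |S x (v, j v)| * a v k = |S x (v, j v)| * (a v k * b (j v) s) := by ring
        _ ≤ _ := by gcongr; exact (ha.pos _ _).le
    have hs2 := Summable.of_nonneg_of_le (fun _ => abs_nonneg _) hle hs1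
    refine ⟨hs2, (hs2.tsum_le_tsum hle hs1).trans ?_⟩
    exact tsum_comp_le_tsum_of_inj (hS x (max k s))
      (fun n => mul_nonneg (abs_nonneg _) (hd0 n _)) hinj
  have hTmem : ∀ x, memLamL l1 a (T x) := fun x k => (l1.mem_of_summable (hTle x k).1).1
  obtain ⟨N, hN⟩ := hB1 T hTmem (fun k => by
    obtain ⟨q, C, hC, h⟩ := hcont (max k s)
    exact ⟨q, opSeminorm_lt_top_of_bound hC fun x _ =>
      ((l1.mem_of_summable (hTle x k).1).2.trans (hTle x k).2).trans (h x)⟩)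
  obtain ⟨C, hC, hCb⟩ := exists_bound_of_opSeminorm_lt_top (fun _ _ _ => trivial)
    (fun x _ => apply_nonneg (p N) x) (fun t x _ => by simp [map_smul_eq_mul])
    (fun t x _ => by rw [map_smul, lamLNorm_smul _ _ (hTmem x)]) (hN (nf (m + N)))
  set t := Nat.pair N ⌈C⌉₊ with ht
  have hNt : Nf t = m + N := by simp [hNf, ht]
  have hCt : C ≤ t := (Nat.le_ceil C).trans (by exact_mod_cast Nat.right_le_pair N ⌈C⌉₊)
  have h1 := hix t
  rw [hNt] at h1
  refine h1.not_ge ?_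
  have h2 := abs_mul_le_lamLNorm ha (nf (m + N)) (hTmem (x t)) (φ t)
  have h3 : |T (x t) (φ t)| = b (i t) s * |S (x t) (φ t, i t)| := by
    change |b (j (φ t)) s * S (x t) (φ t, j (φ t))| = _
    rw [hjφ, abs_mul, abs_of_pos (hb.pos _ _)]
  rw [h3] at h2
  calc _ = b (i t) s * |S (x t) (φ t, i t)| * a (φ t) (nf (m + N)) := by ring
    _ ≤ C * p N (x t) := h2.trans (hCb (x t) trivial)
    _ ≤ t * p (m + N) (x t) :=
      mul_le_mul hCt (hpm (by omega) _) (apply_nonneg _ _) (Nat.cast_nonneg _)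

/-! ### The images of the unit vectors of `λ(D)` -/

/-- If `(λ^{ℓ₂}(B), λ^{ℓ₃}(C)) ∈ 𝓑`, a continuous `R : λ(D) → λ^{ℓ₃}(C)` satisfies
`‖R e_{(v,i)}‖_r ≤ C a_v^n b_i^N` with one `N` for all `r`; only `n` and `C` depend on `r`. -/
theorem uniform_bound_unit
    (a b c : ℕ → ℕ → ℝ)
    (ha : IsKotheMatrix a) (hb : IsKotheMatrix b)
    (l2 l3 : MonoBanachSeqSpace)
    (hGPb : ∀ k, ∃ m, Summable fun i => b i k / b i m)
    (d : ℕ × ℕ → ℕ → ℝ) (hd : ∀ (v i k : ℕ), d (v, i) k = a v k * b i k)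
    (hB2 : ∀ R : (ℕ → ℝ) → (ℕ → ℝ),
        (∀ z, memLamL l2 b z → memLamL l3 c (R z)) →
        (∀ z w, memLamL l2 b z → memLamL l2 b w → R (z + w) = R z + R w) →
        (∀ (t : ℝ) (z), memLamL l2 b z → R (t • z) = t • R z) →
        (∀ k, ∃ m, opSeminorm (memLamL l2 b) (lamLNorm l2 b m) (lamLNorm l3 c k) R < ⊤) →
        ∃ N, ∀ r, opSeminorm (memLamL l2 b) (lamLNorm l2 b N) (lamLNorm l3 c r) R < ⊤)
    (R : (ℕ × ℕ → ℝ) → (ℕ → ℝ))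
    (hmem : ∀ z, memLam d z → memLamL l3 c (R z))
    (hadd : ∀ z w, memLam d z → memLam d w → R (z + w) = R z + R w)
    (hsmul : ∀ (t : ℝ) (z), memLam d z → R (t • z) = t • R z)
    (hcont : ∀ k, ∃ q, ∃ C : ℝ, 0 ≤ C ∧
      ∀ z, memLam d z → lamLNorm l3 c k (R z) ≤ C * lamNorm d q z) :
    ∃ N, ∀ r, ∃ n, ∃ C : ℝ, 0 ≤ C ∧
      ∀ v i, lamLNorm l3 c r (R (Pi.single (v, i) 1)) ≤ C * (a v n * b i N) := by
  choose q K hK0 hK using hcont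
  by_contra hcon
  push Not at hcon
  choose rf hrf using hcon
  have hpt : ∀ k v i, lamLNorm l3 c k (R (Pi.single (v, i) 1)) ≤
      K k * (a v (q k) * b i (q k)) := fun k v i => by
    rw [← hd, ← lamNorm_single (d := d) (v, i) (q k)]
    exact hK k _ (memLam_single _)
  -- the first component of `Nat.unpair` takes every value infinitely often
  set Nf : ℕ → ℕ := fun t => (Nat.unpair t).1 with hNf
  set nf : ℕ → ℕ := fun t => max t (q (rf (Nf t))) with hnf
  have hfreq : ∀ t : ℕ, ∃ᶠ i in Filter.atTop, ∃ v,
      (t : ℝ) * (a v (nf t) * b i (Nf t)) < lamLNorm l3 c (rf (Nf t)) (R (Pi.single (v, i) 1)) := by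
    intro t
    rw [Filter.frequently_atTop]
    intro V
    set r := rf (Nf t) with hr
    have hnn : ∀ i ∈ Finset.range V, 0 ≤ K r * (b i (q r) / b i (Nf t)) := fun i _ =>
      mul_nonneg (hK0 r) (div_pos (hb.pos _ _) (hb.pos _ _)).le
    have hsum := Finset.sum_nonneg hnn
    obtain ⟨v, i, hx⟩ := hrf (Nf t) (nf t)
      (t + ∑ i ∈ Finset.range V, K r * (b i (q r) / b i (Nf t))) (by positivity)
    have hp0 : 0 ≤ a v (nf t) * b i (Nf t) := (mul_pos (ha.pos _ _) (hb.pos _ _)).le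
    refine ⟨i, ?_, v, lt_of_le_of_lt (mul_le_mul_of_nonneg_right (by linarith) hp0) hx⟩
    -- a violation at some `i < V` contradicts the continuity bound `hpt`, as `nf t ≥ q r`
    by_contra hi
    push Not at hi
    refine hx.not_ge ((hpt r v i).trans ?_)
    have h1 := Finset.single_le_sum hnn (Finset.mem_range.2 hi)
    have h2 : a v (q r) ≤ a v (nf t) := ha.mono v (le_max_right _ _)
    have hb0 := hb.pos i (Nf t)
    have hb1 := hb.pos i (q r)
    have hK1 := hK0 r
    calc K r * (a v (q r) * b i (q r)) ≤ K r * (a v (nf t) * b i (q r)) := by gcongr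
      _ = K r * (b i (q r) / b i (Nf t)) * (a v (nf t) * b i (Nf t)) := by field_simp
      _ ≤ _ := mul_le_mul_of_nonneg_right (h1.trans (by simp)) hp0
  obtain ⟨φ, hφ, hP⟩ := Filter.extraction_forall_of_frequently hfreq
  choose vt hvt using hP
  set g : ℕ → ℕ := Function.invFun φ with hg
  have hgφ : ∀ t, g (φ t) = t := fun t => Function.leftInverse_invFun hφ.injective t
  set ζ : (ℕ → ℝ) → (ℕ × ℕ → ℝ) := fun z j =>
    if j.1 = vt (g j.2) then z j.2 / a (vt (g j.2)) (nf (g j.2)) else 0 with hζ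
  have hζadd : ∀ z w, ζ (z + w) = ζ z + ζ w := fun z w => by
    funext j
    by_cases h : j.1 = vt (g j.2) <;> simp [hζ, h, add_div]
  have hζsmul : ∀ (t : ℝ) z, ζ (t • z) = t • ζ z := fun t z => by
    funext j
    by_cases h : j.1 = vt (g j.2) <;> simp [hζ, h, mul_div_assoc]
  have hinj : Function.Injective fun i : ℕ => (vt (g i), i) := fun v w h => (Prod.ext_iff.1 h).2
  have hsupp : ∀ z k, Function.support (fun j => |ζ z j| * d j k) ⊆
      Set.range fun i : ℕ => (vt (g i), i) := by
    intro z k j hj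
    by_contra hne
    refine hj ?_
    have : j.1 ≠ vt (g j.2) := fun h => hne ⟨j.2, Prod.ext h.symm rfl⟩
    simp [hζ, this]
  -- only the finitely many `t < k` can have `a_v^k > a_v^{nf t}`
  have hratio : ∀ k, ∃ M : ℝ, 0 ≤ M ∧ ∀ t, a (vt t) k / a (vt t) (nf t) ≤ M := by
    intro k
    have hnn : ∀ t ∈ Finset.range k, 0 ≤ a (vt t) k / a (vt t) (nf t) := fun t _ =>
      (div_pos (ha.pos _ _) (ha.pos _ _)).le
    have hs := Finset.sum_nonneg hnn
    refine ⟨1 + ∑ t ∈ Finset.range k, a (vt t) k / a (vt t) (nf t), by positivity, fun t => ?_⟩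
    rcases lt_or_ge t k with h | h
    · have := Finset.single_le_sum hnn (Finset.mem_range.2 h)
      linarith
    · have : a (vt t) k / a (vt t) (nf t) ≤ 1 := by
        rw [div_le_one (ha.pos _ _)]
        exact ha.mono _ (h.trans (le_max_left _ _))
      linarith
  have hζb : ∀ k, ∃ m, ∃ C : ℝ, 0 ≤ C ∧ ∀ z, memLamL l2 b z →
      (Summable fun j => |ζ z j| * d j k) ∧ lamNorm d k (ζ z) ≤ C * lamLNorm l2 b m z := by
    intro k
    obtain ⟨m, hm⟩ := hGPb k
    obtain ⟨M, hM0, hM⟩ := hratio k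
    refine ⟨m, M * ∑' i, b i k / b i m, mul_nonneg hM0
      (tsum_nonneg fun i => (div_pos (hb.pos _ _) (hb.pos _ _)).le), fun z hz => ?_⟩
    have heq : ∀ i, ((fun j => |ζ z j| * d j k) ∘ fun i : ℕ => (vt (g i), i)) i =
        a (vt (g i)) k / a (vt (g i)) (nf (g i)) * (|z i| * b i k) := by
      intro i
      have h0 := ha.pos (vt (g i)) (nf (g i))
      simp only [Function.comp_apply, hζ, hd, if_true, abs_div, abs_of_pos h0]
      field_simp
    have hle : ∀ i, ((fun j => |ζ z j| * d j k) ∘ fun i : ℕ => (vt (g i), i)) i ≤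
        M * lamLNorm l2 b m z * (b i k / b i m) := by
      intro i
      rw [heq]
      have h1 := abs_mul_le_lamLNorm hb m hz i
      have hb1 := hb.pos i k
      have hb2 := hb.pos i m
      calc _ ≤ M * (|z i| * b i k) := by gcongr; exact hM _
        _ = M * (|z i| * b i m) * (b i k / b i m) := by field_simp
        _ ≤ _ := by gcongr
    have hs := hm.mul_left (M * lamLNorm l2 b m z)
    have hs1 := Summable.of_nonneg_of_le (fun i => by
      rw [heq]
      exact mul_nonneg (div_pos (ha.pos _ _) (ha.pos _ _)).le
        (mul_nonneg (abs_nonneg _) (hb.pos _ _).le)) hle hs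
    refine ⟨(hinj.summable_iff fun j hj => by
      by_contra h
      exact hj (hsupp z k h)).1 hs1, ?_⟩
    have h2 := hs1.tsum_le_tsum hle hs
    rw [tsum_mul_left] at h2
    unfold lamNorm
    rw [← hinj.tsum_eq (hsupp z k)]
    refine h2.trans_eq (by ring)
  have hζmem : ∀ z, memLamL l2 b z → memLam d (ζ z) := fun z hz k => by
    obtain ⟨m, C, hC, h⟩ := hζb k
    exact (h z hz).1
  obtain ⟨N, hN⟩ := hB2 (fun z => R (ζ z)) (fun z hz => hmem _ (hζmem z hz))
    (fun z w hz hw => by simp only [hζadd]; exact hadd _ _ (hζmem z hz) (hζmem w hw))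
    (fun t z hz => by simp only [hζsmul]; exact hsmul _ _ (hζmem z hz))
    (fun k => by
      obtain ⟨m, C, hC, h⟩ := hζb (q k)
      refine ⟨m, opSeminorm_lt_top_of_bound (mul_nonneg (hK0 k) hC) fun z hz => ?_⟩
      refine (hK k _ (hζmem z hz)).trans ?_
      rw [mul_assoc]
      exact mul_le_mul_of_nonneg_left (h z hz).2 (hK0 k))
  obtain ⟨C, hC, hCb⟩ := exists_bound_of_opSeminorm_lt_top
    (fun t z hz => memLamL_smul t hz) (fun z hz => lamLNorm_nonneg N hz)
    (fun t z hz => lamLNorm_smul N t hz)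
    (fun t z hz => by
      simp only [hζsmul]
      rw [hsmul _ _ (hζmem z hz), lamLNorm_smul _ _ (hmem _ (hζmem z hz))]) (hN (rf N))
  set t := Nat.pair N ⌈C⌉₊ with ht
  have hNt : Nf t = N := by simp [hNf, ht]
  have hCt : C ≤ t := (Nat.le_ceil C).trans (by exact_mod_cast Nat.right_le_pair N ⌈C⌉₊)
  have h1 := hvt t
  rw [hNt] at h1
  have ha0 := ha.pos (vt t) (nf t)
  have hζe : ζ (eSeq (φ t)) =
      (a (vt t) (nf t))⁻¹ • (Pi.single (vt t, φ t) 1 : ℕ × ℕ → ℝ) := by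
    funext ⟨v, i⟩
    by_cases hi : i = φ t
    · subst hi
      by_cases hv : v = vt t
      · subst hv
        simp [hζ, hgφ, eSeq]
      · simp [hζ, hgφ, hv]
    · simp [hζ, eSeq, hi]
  have h2 := hCb (eSeq (φ t)) (memLamL_eSeq _)
  simp only [hζe] at h2
  rw [hsmul _ _ (memLam_single _), lamLNorm_smul _ _ (hmem _ (memLam_single _)),
    lamLNorm_eSeq hb, abs_of_pos (inv_pos.2 ha0), inv_mul_le_iff₀ ha0] at h2
  refine h1.not_ge (h2.trans ?_)
  have hb0 := hb.pos (φ t) N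
  calc a (vt t) (nf t) * (C * b (φ t) N) = C * (a (vt t) (nf t) * b (φ t) N) := by ring
    _ ≤ _ := by gcongr

/-! ### Boundedness of the composition -/

/-- Theorem 5. Let `E` be a Fréchet space, `A`, `B` Köthe matrices
satisfying the Grothendieck–Pietsch nuclearity condition and `C` a Köthe matrix, and let
`D` be the Köthe matrix on `ℕ × ℕ` with `d_{(v,i)}^k = a_v^k b_i^k` (so that `λ(D)` is the
completed projective tensor product `λ^{ℓ₁}(A) ⊗̂_π λ^{ℓ₂}(B)`). If `(E, λ^{ℓ₁}(A)) ∈ 𝓑`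
and `(λ^{ℓ₂}(B), λ^{ℓ₃}(C)) ∈ 𝓑`, then `(E, λ(D), λ^{ℓ₃}(C)) ∈ 𝓑𝓕`. -/
theorem BF_tensor_factorization
    {E : Type*} [AddCommGroup E] [Module ℝ E]
    (p : ℕ → Seminorm ℝ E)
    (hpmono : ∀ k x, p k x ≤ p (k + 1) x)
    (hHaus : ∀ x : E, (∀ k, p k x = 0) → x = 0)
    (hComplete : ∀ u : ℕ → E,
      (∀ k, ∀ ε : ℝ, 0 < ε → ∃ M, ∀ i j, M ≤ i → M ≤ j → p k (u i - u j) < ε) →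
      ∃ x : E, ∀ k, ∀ ε : ℝ, 0 < ε → ∃ M, ∀ i, M ≤ i → p k (u i - x) < ε)
    (a b c : ℕ → ℕ → ℝ)
    (ha : IsKotheMatrix a) (hb : IsKotheMatrix b) (hc : IsKotheMatrix c)
    (l1 l2 l3 : MonoBanachSeqSpace)
    (hGPa : ∀ k, ∃ m, Summable fun v => a v k / a v m)
    (hGPb : ∀ k, ∃ m, Summable fun i => b i k / b i m)
    (d : ℕ × ℕ → ℕ → ℝ) (hd : ∀ (v i k : ℕ), d (v, i) k = a v k * b i k)
    (hB1 : ∀ T : E →ₗ[ℝ] (ℕ → ℝ),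
        (∀ x, memLamL l1 a (T x)) →
        (∀ k, ∃ m, opSeminorm (fun _ : E => True) (fun x => p m x) (lamLNorm l1 a k) T < ⊤) →
        ∃ N, ∀ r, opSeminorm (fun _ : E => True) (fun x => p N x) (lamLNorm l1 a r) T < ⊤)
    (hB2 : ∀ R : (ℕ → ℝ) → (ℕ → ℝ),
        (∀ z, memLamL l2 b z → memLamL l3 c (R z)) →
        (∀ z w, memLamL l2 b z → memLamL l2 b w → R (z + w) = R z + R w) →
        (∀ (t : ℝ) (z), memLamL l2 b z → R (t • z) = t • R z) →
        (∀ k, ∃ m, opSeminorm (memLamL l2 b) (lamLNorm l2 b m) (lamLNorm l3 c k) R < ⊤) →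
        ∃ N, ∀ r, opSeminorm (memLamL l2 b) (lamLNorm l2 b N) (lamLNorm l3 c r) R < ⊤) :
    ∀ (S : E →ₗ[ℝ] (ℕ × ℕ → ℝ)) (R : (ℕ × ℕ → ℝ) → (ℕ → ℝ)),
      (∀ x, memLam d (S x)) →
      (∀ z, memLam d z → memLamL l3 c (R z)) →
      (∀ z w, memLam d z → memLam d w → R (z + w) = R z + R w) →
      (∀ (t : ℝ) (z), memLam d z → R (t • z) = t • R z) →
      (∀ k, ∃ m, opSeminorm (fun _ : E => True) (fun x => p m x) (lamNorm d k) S < ⊤) →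
      (∀ k, ∃ m, opSeminorm (memLam d) (lamNorm d m) (lamLNorm l3 c k) R < ⊤) →
      ∃ N, ∀ r, opSeminorm (fun _ : E => True) (fun x => p N x) (lamLNorm l3 c r)
        (fun x => R (S x)) < ⊤ := by
  intro S R hS hmem hadd hsmul hScont hRcont
  have hd0 : ∀ j k, 0 ≤ d j k := fun ⟨v, i⟩ k => by
    rw [hd]; exact (mul_pos (ha.pos v k) (hb.pos i k)).le
  have hScont' : ∀ k, ∃ m, ∃ C : ℝ, 0 ≤ C ∧ ∀ x, lamNorm d k (S x) ≤ C * p m x := fun k => by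
    obtain ⟨m, hm⟩ := hScont k
    obtain ⟨C, hC, h⟩ := exists_bound_of_opSeminorm_lt_top (fun _ _ _ => trivial)
      (fun x _ => apply_nonneg (p m) x) (fun t x _ => by simp [map_smul_eq_mul])
      (fun t x _ => by rw [map_smul, lamNorm_smul]) hm
    exact ⟨m, C, hC, fun x => h x trivial⟩
  have hRcont' : ∀ k, ∃ q, ∃ C : ℝ, 0 ≤ C ∧
      ∀ z, memLam d z → lamLNorm l3 c k (R z) ≤ C * lamNorm d q z := fun k => by
    obtain ⟨q, hq⟩ := hRcont k
    exact ⟨q, exists_bound_of_opSeminorm_lt_top (fun t z hz => memLam_smul t hz)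
      (fun z _ => lamNorm_nonneg hd0 q z) (fun t z _ => lamNorm_smul q t z)
      (fun t z hz => by rw [hsmul _ _ hz, lamLNorm_smul _ _ (hmem _ hz)]) hq⟩
  obtain ⟨N', hN'⟩ := uniform_bound_unit a b c ha hb l2 l3 hGPb d hd hB2 R hmem hadd hsmul hRcont'
  obtain ⟨s, hs⟩ := hGPb N'
  obtain ⟨N, hN⟩ := uniform_bound_coord p hpmono a b ha hb l1 d hd hB1 S hS hScont' s
  refine ⟨N, fun r => ?_⟩
  obtain ⟨n', C2, hC2, h2⟩ := hN' r
  obtain ⟨n, hn⟩ := hGPa n'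
  obtain ⟨C1, hC1, h1⟩ := hN n
  obtain ⟨q, K, hK0, hK⟩ := hRcont' r
  have hna : ∀ v, 0 ≤ a v n' / a v n := fun v => (div_pos (ha.pos _ _) (ha.pos _ _)).le
  have hnb : ∀ i, 0 ≤ b i N' / b i s := fun i => (div_pos (hb.pos _ _) (hb.pos _ _)).le
  have hprod : Summable fun j : ℕ × ℕ => a j.1 n' / a j.1 n * (b j.2 N' / b j.2 s) :=
    hn.mul_of_nonneg hs hna hnb
  have hW0 : 0 ≤ ∑' j : ℕ × ℕ, a j.1 n' / a j.1 n * (b j.2 N' / b j.2 s) :=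
    tsum_nonneg fun j => mul_nonneg (hna _) (hnb _)
  refine opSeminorm_lt_top_of_bound (mul_nonneg (mul_nonneg hC1 hC2) hW0) fun x _ => ?_
  have hp0 : 0 ≤ p N x := apply_nonneg _ _
  refine norm_apply_le_of_partial_sums hd0 hmem hadd hsmul hK (hS x) fun F => ?_
  calc ∑ j ∈ F, |S x j| * lamLNorm l3 c r (R (Pi.single j 1))
      ≤ ∑ j ∈ F, C1 * C2 * p N x * (a j.1 n' / a j.1 n * (b j.2 N' / b j.2 s)) := by
        refine Finset.sum_le_sum ?_
        rintro ⟨v, i⟩ -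
        have ha1 := ha.pos v n
        have ha2 := ha.pos v n'
        have hb1 := hb.pos i s
        have hb2 := hb.pos i N'
        calc |S x (v, i)| * lamLNorm l3 c r (R (Pi.single (v, i) 1))
            ≤ |S x (v, i)| * (C2 * (a v n' * b i N')) :=
              mul_le_mul_of_nonneg_left (h2 v i) (abs_nonneg _)
          _ = |S x (v, i)| * (a v n * b i s) * (C2 * (a v n' / a v n * (b i N' / b i s))) := by
              field_simp
          _ ≤ C1 * p N x * (C2 * (a v n' / a v n * (b i N' / b i s))) :=
              mul_le_mul_of_nonneg_right (h1 v i x) (by positivity)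
          _ = _ := by ring
    _ = C1 * C2 * p N x * ∑ j ∈ F, a j.1 n' / a j.1 n * (b j.2 N' / b j.2 s) := by
        rw [Finset.mul_sum]
    _ ≤ C1 * C2 * p N x * ∑' j : ℕ × ℕ, a j.1 n' / a j.1 n * (b j.2 N' / b j.2 s) :=
        mul_le_mul_of_nonneg_left
          (hprod.sum_le_tsum F fun j _ => mul_nonneg (hna _) (hnb _)) (by positivity)
    _ = _ := by ring
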